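/- arXiv:2202.09319 — 2 statements merged into one kernel-verified Lean document; each statement's English description precedes it below -/
import Mathlib

section
/- For (a,b,c) ∈ ℂ³ with (a,b,c) ≠ (0,0,0), set q_{a,b,c} = a·x₀x₁x₂x₃ + b·Σ_{0≤i<j≤3} xᵢ²xⱼ² + c·(x₀⁴+x₁⁴+x₂⁴+x₃⁴) ∈ ℂ[x₀,x₁,x₂,x₃]. Then q_{a,b,c} is reducible (i.e., a product of two nonconstant polynomials) if and only if (a,b,c) is a nonzero scalar multiple of one of the four triples (1,0,0), (−8,−2,1), (8,−2,1), (0,2,1). -/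
/-!
A factorization of the homogeneous quartic may be replaced by the product of the top-degree
components of its factors (`homogeneousComponent_mul_top`), so it has type `1 + 3` or `2 + 2`.

Type `1 + 3`, with plane `l₁x + l₂y + l₃z + l₄w = 0` (`exceptional_of_plane`): the quartic vanishes
at the point of the plane on each edge of the coordinate tetrahedron, which says
`c (lᵢ⁴ + lⱼ⁴) + b lᵢ² lⱼ² = 0`. If `c = 0` this forces `b = 0`. Otherwise all ratios `lᵢ²/lⱼ²` lie
in a set `{s, s⁻¹}`, two of them coincide by pigeonhole (`pairwise_ratio`), hence `b = -2c` and all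
`lᵢ²` are equal; one further point of the plane gives `a² = 64c²`.

Type `2 + 2`, with diagonal coefficients `pᵢ, Pᵢ` and mixed coefficients `mᵢⱼ, Mᵢⱼ`, normalized to
`c = 1`: then `Pᵢ = pᵢ⁻¹` and `Mᵢⱼ = -mᵢⱼ/pᵢ²`.
* If some `mᵢⱼ` is nonzero, the coefficients of `x²yz` kill every mixed term meeting the edge `ij` in
  one vertex and make all `pᵢ²` equal (`ternary_mixed`); what remains forces `b = -2`, `a² = 64`
  (`quadric_mixed`).
* If all mixed terms vanish, then `a = 0` and the ratios `pᵢ/pⱼ` are roots of `t² - bt + 1`, so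
  `b = 2` by the same pigeonhole argument (`quadric_one`).

For `c = 0` already the restriction of the quartic to a coordinate plane has no such factorization
unless `b = 0` (`ternary_zero`).
-/


open MvPolynomial

noncomputable section

/-- The quartic form
`a·x₀x₁x₂x₃ + b·Σ_{i<j} xᵢ²xⱼ² + c·(x₀⁴+x₁⁴+x₂⁴+x₃⁴)`. -/
def quartic (a b c : ℂ) : MvPolynomial (Fin 4) ℂ :=
  C a * (X 0 * X 1 * X 2 * X 3) +
    C b * (X 0 ^ 2 * X 1 ^ 2 + X 0 ^ 2 * X 2 ^ 2 + X 0 ^ 2 * X 3 ^ 2 +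
      X 1 ^ 2 * X 2 ^ 2 + X 1 ^ 2 * X 3 ^ 2 + X 2 ^ 2 * X 3 ^ 2) +
    C c * (X 0 ^ 4 + X 1 ^ 4 + X 2 ^ 4 + X 3 ^ 4)

/-! ### Homogeneous factors -/

/-- The product of the top-degree components is the top-degree component of the product. -/
theorem homogeneousComponent_mul_top (u v : MvPolynomial (Fin 4) ℂ) :
    homogeneousComponent (u.totalDegree + v.totalDegree) (u * v) =
      homogeneousComponent u.totalDegree u * homogeneousComponent v.totalDegree v := by
  have key : ∀ i ∈ Finset.range (u.totalDegree + 1), ∀ j ∈ Finset.range (v.totalDegree + 1),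
      homogeneousComponent (u.totalDegree + v.totalDegree)
        (homogeneousComponent i u * homogeneousComponent j v) =
      if i = u.totalDegree then if j = v.totalDegree then
        homogeneousComponent i u * homogeneousComponent j v else 0 else 0 := by
    intro i hi j hj
    rw [Finset.mem_range] at hi hj
    rw [homogeneousComponent_of_mem ((homogeneousComponent_isHomogeneous i u).mul
      (homogeneousComponent_isHomogeneous j v))]
    split_ifs <;> first | rfl | omega
  conv_lhs =>
    arg 2
    rw [← sum_homogeneousComponent u, ← sum_homogeneousComponent v]
  rw [Finset.sum_mul_sum, map_sum]
  simp only [map_sum]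
  rw [Finset.sum_congr rfl fun i hi => Finset.sum_congr rfl fun j hj => key i hi j hj]
  simp

/-- A form of degree 1, evaluated through its coefficients. -/
theorem linear_form {u : MvPolynomial (Fin 4) ℂ} (hu : u.IsHomogeneous 1) :
    ∃ l : Fin 4 → ℂ, ∀ x : Fin 4 → ℂ,
      eval x u = l 0 * x 0 + l 1 * x 1 + l 2 * x 2 + l 3 * x 3 := by
  rw [← support_sum_monomial_coeff u]
  refine Finset.sum_induction _ (fun p : MvPolynomial (Fin 4) ℂ =>
    ∃ l : Fin 4 → ℂ, ∀ x : Fin 4 → ℂ,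
      eval x p = l 0 * x 0 + l 1 * x 1 + l 2 * x 2 + l 3 * x 3) ?_ ⟨0, by simp⟩ ?_
  · rintro p q ⟨l, hl⟩ ⟨l', hl'⟩
    refine ⟨l + l', fun x => ?_⟩
    simp only [map_add, hl, hl', Pi.add_apply]
    ring
  · intro d hd
    have h1 : d 0 + d 1 + d 2 + d 3 = 1 := by
      have : 1 = d.degree := hu.degree_eq_sum_deg_support hd
      rw [Finsupp.degree_eq_sum, Fin.sum_univ_four] at this
      exact this.symm
    refine ⟨fun i => if d i = 1 then coeff d u else 0, fun x => ?_⟩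
    beta_reduce
    rw [eval_monomial, Finsupp.prod_fintype _ _ (by simp), Fin.prod_univ_four]
    have a0 : d 0 ≤ 1 := by omega
    have a1 : d 1 ≤ 1 := by omega
    have a2 : d 2 ≤ 1 := by omega
    have a3 : d 3 ≤ 1 := by omega
    generalize d 0 = e0 at *
    generalize d 1 = e1 at *
    generalize d 2 = e2 at *
    generalize d 3 = e3 at *
    interval_cases e0 <;> interval_cases e1 <;> interval_cases e2 <;> interval_cases e3 <;>
      first | omega | simp

/-- A form of degree 2, evaluated through its coefficients. -/
theorem quadratic_form {u : MvPolynomial (Fin 4) ℂ} (hu : u.IsHomogeneous 2) :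
    ∃ p1 p2 p3 p4 m12 m13 m14 m23 m24 m34 : ℂ, ∀ x : Fin 4 → ℂ,
      eval x u = p1 * x 0 ^ 2 + p2 * x 1 ^ 2 + p3 * x 2 ^ 2 + p4 * x 3 ^ 2
        + m12 * (x 0 * x 1) + m13 * (x 0 * x 2) + m14 * (x 0 * x 3)
        + m23 * (x 1 * x 2) + m24 * (x 1 * x 3) + m34 * (x 2 * x 3) := by
  rw [← support_sum_monomial_coeff u]
  refine Finset.sum_induction _ (fun p : MvPolynomial (Fin 4) ℂ =>
    ∃ p1 p2 p3 p4 m12 m13 m14 m23 m24 m34 : ℂ, ∀ x : Fin 4 → ℂ,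
      eval x p = p1 * x 0 ^ 2 + p2 * x 1 ^ 2 + p3 * x 2 ^ 2 + p4 * x 3 ^ 2
        + m12 * (x 0 * x 1) + m13 * (x 0 * x 2) + m14 * (x 0 * x 3)
        + m23 * (x 1 * x 2) + m24 * (x 1 * x 3) + m34 * (x 2 * x 3)) ?_
    ⟨0, 0, 0, 0, 0, 0, 0, 0, 0, 0, by simp⟩ ?_
  · rintro p q ⟨p1, p2, p3, p4, m12, m13, m14, m23, m24, m34, hp⟩
      ⟨q1, q2, q3, q4, n12, n13, n14, n23, n24, n34, hq⟩
    refine ⟨p1 + q1, p2 + q2, p3 + q3, p4 + q4, m12 + n12, m13 + n13, m14 + n14, m23 + n23,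
      m24 + n24, m34 + n34, fun x => ?_⟩
    simp only [map_add, hp, hq]
    ring
  · intro d hd
    have h1 : d 0 + d 1 + d 2 + d 3 = 2 := by
      have : 2 = d.degree := hu.degree_eq_sum_deg_support hd
      rw [Finsupp.degree_eq_sum, Fin.sum_univ_four] at this
      exact this.symm
    let s : Fin 4 → ℂ := fun i => if d i = 2 then coeff d u else 0
    let t : Fin 4 → Fin 4 → ℂ := fun i j => if d i = 1 ∧ d j = 1 then coeff d u else 0
    refine ⟨s 0, s 1, s 2, s 3, t 0 1, t 0 2, t 0 3, t 1 2, t 1 3, t 2 3, fun x => ?_⟩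
    simp only [s, t]
    rw [eval_monomial, Finsupp.prod_fintype _ _ (by simp), Fin.prod_univ_four]
    have a0 : d 0 ≤ 2 := by omega
    have a1 : d 1 ≤ 2 := by omega
    have a2 : d 2 ≤ 2 := by omega
    have a3 : d 3 ≤ 2 := by omega
    clear s t
    generalize d 0 = e0 at *
    generalize d 1 = e1 at *
    generalize d 2 = e2 at *
    generalize d 3 = e3 at *
    interval_cases e0 <;> interval_cases e1 <;> interval_cases e2 <;> interval_cases e3 <;>
      first | omega | simp

/-! ### The quartic form -/

theorem eval_quartic (a b c : ℂ) (x : Fin 4 → ℂ) :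
    eval x (quartic a b c) = a * (x 0 * x 1 * x 2 * x 3) +
      b * (x 0 ^ 2 * x 1 ^ 2 + x 0 ^ 2 * x 2 ^ 2 + x 0 ^ 2 * x 3 ^ 2 +
        x 1 ^ 2 * x 2 ^ 2 + x 1 ^ 2 * x 3 ^ 2 + x 2 ^ 2 * x 3 ^ 2) +
      c * (x 0 ^ 4 + x 1 ^ 4 + x 2 ^ 4 + x 3 ^ 4) := by
  simp [quartic]

theorem quartic_isHomogeneous (a b c : ℂ) : (quartic a b c).IsHomogeneous 4 := by
  have X2 : ∀ i j : Fin 4, (X i ^ 2 * X j ^ 2 : MvPolynomial (Fin 4) ℂ).IsHomogeneous 4 :=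
    fun i j => (isHomogeneous_X_pow i 2).mul (isHomogeneous_X_pow j 2)
  have X4 : ∀ i : Fin 4, (X i ^ 4 : MvPolynomial (Fin 4) ℂ).IsHomogeneous 4 :=
    fun i => isHomogeneous_X_pow i 4
  have X1 : (X 0 * X 1 * X 2 * X 3 : MvPolynomial (Fin 4) ℂ).IsHomogeneous 4 :=
    (((isHomogeneous_X ℂ 0).mul (isHomogeneous_X ℂ 1)).mul (isHomogeneous_X ℂ 2)).mul
      (isHomogeneous_X ℂ 3)
  refine ((X1.C_mul a).add (IsHomogeneous.C_mul ?_ b)).add (IsHomogeneous.C_mul ?_ c)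
  · exact (((((X2 0 1).add (X2 0 2)).add (X2 0 3)).add (X2 1 2)).add (X2 1 3)).add (X2 2 3)
  · exact (((X4 0).add (X4 1)).add (X4 2)).add (X4 3)

theorem quartic_ne_zero {a b c : ℂ} (h : ¬(a = 0 ∧ b = 0 ∧ c = 0)) : quartic a b c ≠ 0 := by
  intro h0
  have H : ∀ x : Fin 4 → ℂ, eval x (quartic a b c) = 0 := fun x => by rw [h0, map_zero]
  have h1 := H ![1, 0, 0, 0]
  have h2 := H ![1, 1, 0, 0]
  have h3 := H ![1, 1, 1, 1]
  simp [eval_quartic] at h1 h2 h3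
  subst h1
  simp at h2
  subst h2
  simp at h3
  exact h ⟨h3, rfl, rfl⟩

theorem totalDegree_pos_of_eval_ne {p : MvPolynomial (Fin 4) ℂ} (x y : Fin 4 → ℂ)
    (h : eval x p ≠ eval y p) : 0 < p.totalDegree := by
  rw [Nat.pos_iff_ne_zero]
  intro h0
  rw [totalDegree_eq_zero_iff_eq_C] at h0
  rw [h0] at h
  simp at h

/-! ### Coefficients of a factorization into quadrics -/

/-- The coefficients of a factorization of a binary quartic form. -/
theorem binary_coeffs {b c p m r P M R : ℂ}
    (H : ∀ x y : ℂ, b * (x ^ 2 * y ^ 2) + c * (x ^ 4 + y ^ 4) =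
      (p * x ^ 2 + r * y ^ 2 + m * (x * y)) * (P * x ^ 2 + R * y ^ 2 + M * (x * y))) :
    p * P = c ∧ p * M + m * P = 0 ∧ p * R + m * M + r * P = b ∧ m * R + r * M = 0 ∧ r * R = c := by
  have e1 := H 1 0
  have e2 := H 0 1
  have e3 := H 1 1
  have e4 := H 1 (-1)
  have e5 := H 1 2
  refine ⟨?_, ?_, ?_, ?_, ?_⟩
  · linear_combination -e1
  · linear_combination -(e3 - e4) / 2 + (e5 + 3 * e1 - 12 * e2 - 3 * e3 - e4) / 6
  · linear_combination -(e3 + e4) / 2 + e1 + e2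
  · linear_combination -(e5 + 3 * e1 - 12 * e2 - 3 * e3 - e4) / 6
  · linear_combination -e2

/-- The coefficient of `x²yz` in a factorization. -/
theorem ternary_coeff {b c p1 p2 p3 m12 m13 m23 P1 P2 P3 M12 M13 M23 : ℂ}
    (H : ∀ x y z : ℂ, b * (x ^ 2 * y ^ 2 + x ^ 2 * z ^ 2 + y ^ 2 * z ^ 2)
        + c * (x ^ 4 + y ^ 4 + z ^ 4) =
      (p1 * x ^ 2 + p2 * y ^ 2 + p3 * z ^ 2 + m12 * (x * y) + m13 * (x * z) + m23 * (y * z)) *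
      (P1 * x ^ 2 + P2 * y ^ 2 + P3 * z ^ 2 + M12 * (x * y) + M13 * (x * z) + M23 * (y * z))) :
    p1 * M23 + m23 * P1 + m12 * M13 + m13 * M12 = 0 := by
  obtain ⟨-, h1, -, h2, -⟩ := binary_coeffs (b := b) (c := c) (p := p2) (r := p3) (m := m23)
    (P := P2) (R := P3) (M := M23) fun y z => by linear_combination H 0 y z
  linear_combination (-H 1 1 1 + H 1 1 (-1) + H 1 (-1) 1 - H 1 (-1) (-1)) / 4 - h1 - h2

/-- A quadratic form in four variables, as a function; `pi` is the coefficient of the square of the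
`i`-th variable and `mij` that of the product of the `i`-th and `j`-th variables. -/
def quadFun (p1 p2 p3 p4 m12 m13 m14 m23 m24 m34 x y z w : ℂ) : ℂ :=
  p1 * x ^ 2 + p2 * y ^ 2 + p3 * z ^ 2 + p4 * w ^ 2
    + m12 * (x * y) + m13 * (x * z) + m14 * (x * w)
    + m23 * (y * z) + m24 * (y * w) + m34 * (z * w)

/-- The quartic form `quartic a b c`, as a function. -/
def quarticFun (a b c x y z w : ℂ) : ℂ :=
  a * (x * y * z * w) +
    b * (x ^ 2 * y ^ 2 + x ^ 2 * z ^ 2 + x ^ 2 * w ^ 2 +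
      y ^ 2 * z ^ 2 + y ^ 2 * w ^ 2 + z ^ 2 * w ^ 2) +
    c * (x ^ 4 + y ^ 4 + z ^ 4 + w ^ 4)

/-- The coefficient of `xyzw` in a factorization. -/
theorem quaternary_coeff {a b c p1 p2 p3 p4 m12 m13 m14 m23 m24 m34
      P1 P2 P3 P4 M12 M13 M14 M23 M24 M34 : ℂ}
    (H : ∀ x y z w : ℂ, quarticFun a b c x y z w =
      quadFun p1 p2 p3 p4 m12 m13 m14 m23 m24 m34 x y z w *
      quadFun P1 P2 P3 P4 M12 M13 M14 M23 M24 M34 x y z w) :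
    m12 * M34 + m34 * M12 + m13 * M24 + m24 * M13 + m14 * M23 + m23 * M14 = a := by
  simp only [quarticFun, quadFun] at H
  linear_combination (-H 1 1 1 1 + H 1 1 1 (-1) + H 1 1 (-1) 1 + H 1 (-1) 1 1
    - H 1 1 (-1) (-1) - H 1 (-1) 1 (-1) - H 1 (-1) (-1) 1 + H 1 (-1) (-1) (-1)) / 8

/-! ### Products of two quadrics with `c = 1` -/

/-- If every ratio of two of the four numbers `p1, p2, p3, p4` is a root of `t² - βt + 1`, then
two of them coincide by the pigeonhole principle, so `1` is a root and `β = 2`; as it is then a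
double root, all four coincide. -/
theorem pairwise_ratio {β p1 p2 p3 p4 : ℂ} (n2 : p2 ≠ 0) (n3 : p3 ≠ 0)
    (h12 : p1 ^ 2 + p2 ^ 2 = β * p1 * p2) (h13 : p1 ^ 2 + p3 ^ 2 = β * p1 * p3)
    (h14 : p1 ^ 2 + p4 ^ 2 = β * p1 * p4) (h23 : p2 ^ 2 + p3 ^ 2 = β * p2 * p3)
    (h24 : p2 ^ 2 + p4 ^ 2 = β * p2 * p4) (h34 : p3 ^ 2 + p4 ^ 2 = β * p3 * p4) :
    β = 2 ∧ p2 = p1 ∧ p3 = p1 ∧ p4 = p1 := by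
  have hβ : β = 2 := by
    by_cases e23 : p2 = p3
    · subst e23
      exact mul_left_cancel₀ (pow_ne_zero 2 n2) (by linear_combination -h23)
    by_cases e24 : p2 = p4
    · subst e24
      exact mul_left_cancel₀ (pow_ne_zero 2 n2) (by linear_combination -h24)
    have f3 : p2 + p3 - β * p1 = 0 :=
      mul_left_cancel₀ (sub_ne_zero.2 e23) (by linear_combination h12 - h13)
    have f4 : p2 + p4 - β * p1 = 0 :=
      mul_left_cancel₀ (sub_ne_zero.2 e24) (by linear_combination h12 - h14)
    have e34 : p4 = p3 := by linear_combination f4 - f3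
    subst e34
    exact mul_left_cancel₀ (pow_ne_zero 2 n3) (by linear_combination -h34)
  subst hβ
  refine ⟨rfl, ?_, ?_, ?_⟩ <;> refine sub_eq_zero.1 (pow_eq_zero_iff (two_ne_zero)|>.1 ?_)
  · linear_combination h12
  · linear_combination h13
  · linear_combination h14

/-- For `c = 1`, one mixed term `xy` in a factor of the ternary form forces the squares of its
diagonal coefficients to agree and excludes the mixed terms `xz` and `yz`. -/
theorem ternary_mixed {b p1 p2 p3 m12 m13 m23 P1 P2 P3 M12 M13 M23 : ℂ} (hm : m12 ≠ 0)
    (H : ∀ x y z : ℂ, b * (x ^ 2 * y ^ 2 + x ^ 2 * z ^ 2 + y ^ 2 * z ^ 2)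
        + 1 * (x ^ 4 + y ^ 4 + z ^ 4) =
      (p1 * x ^ 2 + p2 * y ^ 2 + p3 * z ^ 2 + m12 * (x * y) + m13 * (x * z) + m23 * (y * z)) *
      (P1 * x ^ 2 + P2 * y ^ 2 + P3 * z ^ 2 + M12 * (x * y) + M13 * (x * z) + M23 * (y * z))) :
    p2 ^ 2 = p1 ^ 2 ∧ p3 ^ 2 = p1 ^ 2 ∧ m13 = 0 ∧ m23 = 0 ∧
      2 * p1 ^ 2 = b * p1 * p3 ∧ 2 * p1 ^ 2 = b * p2 * p3 := by
  obtain ⟨u1, u2, u3, u4, u5⟩ := binary_coeffs (b := b) (c := 1) (p := p1) (r := p2) (m := m12)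
    (P := P1) (R := P2) (M := M12) fun x y => by linear_combination H x y 0
  obtain ⟨-, v2, v3, v4, v5⟩ := binary_coeffs (b := b) (c := 1) (p := p1) (r := p3) (m := m13)
    (P := P1) (R := P3) (M := M13) fun x y => by linear_combination H x 0 y
  obtain ⟨-, w2, w3, w4, -⟩ := binary_coeffs (b := b) (c := 1) (p := p2) (r := p3) (m := m23)
    (P := P2) (R := P3) (M := M23) fun x y => by linear_combination H 0 x y
  have t1 := ternary_coeff H
  have t2 := ternary_coeff (b := b) (c := 1) (p1 := p2) (p2 := p1) (p3 := p3) (m12 := m12)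
    (m13 := m23) (m23 := m13) (P1 := P2) (P2 := P1) (P3 := P3) (M12 := M12) (M13 := M23)
    (M23 := M13) fun x y z => by linear_combination H y x z
  have t3 := ternary_coeff (b := b) (c := 1) (p1 := p3) (p2 := p1) (p3 := p2) (m12 := m13)
    (m13 := m23) (m23 := m12) (P1 := P3) (P2 := P1) (P3 := P2) (M12 := M13) (M13 := M23)
    (M23 := M12) fun x y z => by linear_combination H y z x
  have n1 : p1 ≠ 0 := left_ne_zero_of_mul_eq_one u1
  have n2 : p2 ≠ 0 := left_ne_zero_of_mul_eq_one u5
  have n3 : p3 ≠ 0 := left_ne_zero_of_mul_eq_one v5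
  have eP1 : P1 = p1⁻¹ := eq_inv_of_mul_eq_one_right u1
  have eP2 : P2 = p2⁻¹ := eq_inv_of_mul_eq_one_right u5
  have eP3 : P3 = p3⁻¹ := eq_inv_of_mul_eq_one_right v5
  have eM12 : M12 = -m12 / p1 ^ 2 := by
    rw [eP1] at u2; field_simp at u2 ⊢; linear_combination u2
  have eM13 : M13 = -m13 / p1 ^ 2 := by
    rw [eP1] at v2; field_simp at v2 ⊢; linear_combination v2
  have eM23 : M23 = -m23 / p2 ^ 2 := by
    rw [eP2] at w2; field_simp at w2 ⊢; linear_combination w2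
  subst eP1 eP2 eP3 eM12 eM13 eM23
  have s2 : p2 ^ 2 = p1 ^ 2 := by
    field_simp at u4
    exact mul_left_cancel₀ hm (by linear_combination -u4)
  rw [s2] at t1 t2 t3
  have z13 : m13 = 0 := by
    field_simp at t1
    exact mul_left_cancel₀ hm (by linear_combination -t1 / 2)
  have z23 : m23 = 0 := by
    have e : p2⁻¹ = p2 / p1 ^ 2 := by rw [← s2]; field_simp
    rw [e] at t2
    field_simp at t2
    exact mul_left_cancel₀ hm (by linear_combination -t2 / 2)
  subst z13 z23
  have s3 : p3 ^ 2 = p1 ^ 2 := by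
    field_simp at t3
    exact mul_left_cancel₀ hm (by linear_combination -t3)
  refine ⟨s2, s3, rfl, rfl, ?_, ?_⟩
  · linear_combination p1 * p3 * v3 - p1 ^ 2 * v5 - p3 ^ 2 * u1 - s3
  · linear_combination p2 * p3 * w3 - p2 ^ 2 * v5 - p3 ^ 2 * u5 - s2 - s3

/-- For `c = 1`, a factorization with a mixed term `xy` in one quadric occurs only for the
parameters of the two unions of four planes. -/
theorem quadric_mixed {a b p1 p2 p3 p4 m12 m13 m14 m23 m24 m34
      P1 P2 P3 P4 M12 M13 M14 M23 M24 M34 : ℂ} (hm : m12 ≠ 0)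
    (H : ∀ x y z w : ℂ, quarticFun a b 1 x y z w =
      quadFun p1 p2 p3 p4 m12 m13 m14 m23 m24 m34 x y z w *
      quadFun P1 P2 P3 P4 M12 M13 M14 M23 M24 M34 x y z w) :
    b = -2 ∧ a ^ 2 = 64 := by
  have ha := quaternary_coeff H
  simp only [quarticFun, quadFun] at H
  obtain ⟨s2, s3, z13, z23, b13, b23⟩ := ternary_mixed (b := b) (p1 := p1) (p2 := p2) (p3 := p3)
    (m12 := m12) (m13 := m13) (m23 := m23) (P1 := P1) (P2 := P2) (P3 := P3) (M12 := M12)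
    (M13 := M13) (M23 := M23) hm fun x y z => by linear_combination H x y z 0
  obtain ⟨-, s4, z14, z24, b14, b24⟩ := ternary_mixed (b := b) (p1 := p1) (p2 := p2) (p3 := p4)
    (m12 := m12) (m13 := m14) (m23 := m24) (P1 := P1) (P2 := P2) (P3 := P4) (M12 := M12)
    (M13 := M14) (M23 := M24) hm fun x y z => by linear_combination H x y 0 z
  obtain ⟨u1, u2, u3, -, u5⟩ := binary_coeffs (b := b) (c := 1) (p := p1) (r := p2) (m := m12)
    (P := P1) (R := P2) (M := M12) fun x y => by linear_combination H x y 0 0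
  obtain ⟨w1, w2, w3, -, w5⟩ := binary_coeffs (b := b) (c := 1) (p := p3) (r := p4) (m := m34)
    (P := P3) (R := P4) (M := M34) fun x y => by linear_combination H 0 0 x y
  have n1 : p1 ≠ 0 := left_ne_zero_of_mul_eq_one u1
  have n3 : p3 ≠ 0 := left_ne_zero_of_mul_eq_one w1
  have hb13 : 2 * p1 = b * p3 := mul_left_cancel₀ n1 (by linear_combination b13)
  have hb14 : 2 * p1 = b * p4 := mul_left_cancel₀ n1 (by linear_combination b14)
  have nb : b ≠ 0 := by
    rintro rfl
    exact n1 (by linear_combination hb13 / 2)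
  have e21 : p2 = p1 :=
    mul_left_cancel₀ (mul_ne_zero nb n3) (by linear_combination b13 - b23)
  have e43 : p4 = p3 := mul_left_cancel₀ nb (by linear_combination hb13 - hb14)
  subst e21 e43 z13 z23 z14 z24
  have eP2 : P2 = P1 := mul_left_cancel₀ n1 (by linear_combination u5 - u1)
  have eP4 : P4 = P3 := mul_left_cancel₀ n3 (by linear_combination w5 - w1)
  subst eP2 eP4
  have bsq : b ^ 2 = 4 := by
    refine mul_left_cancel₀ (pow_ne_zero 2 n3) ?_
    linear_combination -(2 * p2 + b * p4) * hb13 - 4 * s3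
  have eM12 : M12 = -m12 * P2 ^ 2 := by linear_combination P2 * u2 - M12 * u1
  have eM34 : M34 = -m34 * P4 ^ 2 := by linear_combination P4 * w2 - M34 * w1
  have eP : P4 ^ 2 = P2 ^ 2 := by
    linear_combination -P4 ^ 2 * P2 ^ 2 * s3 + P2 ^ 2 * (p4 * P4 + 1) * w1
      - P4 ^ 2 * (p2 * P2 + 1) * u1
  have nP : P2 ≠ 0 := right_ne_zero_of_mul_eq_one u1
  have f1 : m12 ^ 2 * P2 ^ 2 = 2 - b := by
    rw [eM12] at u3
    linear_combination -u3 + 2 * u1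
  have f2 : m34 ^ 2 * P2 ^ 2 = 2 - b := by
    rw [eM34, eP] at w3
    linear_combination -w3 + 2 * w1
  have b2 : 2 - b ≠ 0 := by
    rw [← f1]
    exact mul_ne_zero (pow_ne_zero 2 hm) (pow_ne_zero 2 nP)
  have hb : b = -2 := mul_left_cancel₀ b2 (by linear_combination -bsq)
  subst hb
  refine ⟨rfl, ?_⟩
  rw [eM12, eM34, eP] at ha
  have ha' : a = -2 * (m12 * m34 * P2 ^ 2) := by linear_combination -ha
  rw [ha']
  linear_combination 4 * m34 ^ 2 * P2 ^ 2 * f1 + 16 * f2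

/-- The factorizations into two quadrics for `c = 1`. -/
theorem quadric_one {a b p1 p2 p3 p4 m12 m13 m14 m23 m24 m34
      P1 P2 P3 P4 M12 M13 M14 M23 M24 M34 : ℂ}
    (H : ∀ x y z w : ℂ, quarticFun a b 1 x y z w =
      quadFun p1 p2 p3 p4 m12 m13 m14 m23 m24 m34 x y z w *
      quadFun P1 P2 P3 P4 M12 M13 M14 M23 M24 M34 x y z w) :
    (b = -2 ∧ a ^ 2 = 64) ∨ (b = 2 ∧ a = 0) := by
  by_cases k12 : m12 = 0
  swap
  · exact Or.inl (quadric_mixed k12 H)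
  by_cases k13 : m13 = 0
  swap
  · exact Or.inl (quadric_mixed (p1 := p1) (p2 := p3) (p3 := p2) (p4 := p4) (m12 := m13)
      (m13 := m12) (m14 := m14) (m23 := m23) (m24 := m34) (m34 := m24) (P1 := P1) (P2 := P3)
      (P3 := P2) (P4 := P4) (M12 := M13) (M13 := M12) (M14 := M14) (M23 := M23) (M24 := M34)
      (M34 := M24) k13 fun x y z w => by
        have := H x z y w
        simp only [quarticFun, quadFun] at this ⊢
        linear_combination this)
  by_cases k14 : m14 = 0
  swap
  · exact Or.inl (quadric_mixed (p1 := p1) (p2 := p4) (p3 := p3) (p4 := p2) (m12 := m14)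
      (m13 := m13) (m14 := m12) (m23 := m34) (m24 := m24) (m34 := m23) (P1 := P1) (P2 := P4)
      (P3 := P3) (P4 := P2) (M12 := M14) (M13 := M13) (M14 := M12) (M23 := M34) (M24 := M24)
      (M34 := M23) k14 fun x y z w => by
        have := H x w z y
        simp only [quarticFun, quadFun] at this ⊢
        linear_combination this)
  by_cases k23 : m23 = 0
  swap
  · exact Or.inl (quadric_mixed (p1 := p3) (p2 := p2) (p3 := p1) (p4 := p4) (m12 := m23)
      (m13 := m13) (m14 := m34) (m23 := m12) (m24 := m24) (m34 := m14) (P1 := P3) (P2 := P2)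
      (P3 := P1) (P4 := P4) (M12 := M23) (M13 := M13) (M14 := M34) (M23 := M12) (M24 := M24)
      (M34 := M14) k23 fun x y z w => by
        have := H z y x w
        simp only [quarticFun, quadFun] at this ⊢
        linear_combination this)
  by_cases k24 : m24 = 0
  swap
  · exact Or.inl (quadric_mixed (p1 := p4) (p2 := p2) (p3 := p3) (p4 := p1) (m12 := m24)
      (m13 := m34) (m14 := m14) (m23 := m23) (m24 := m12) (m34 := m13) (P1 := P4) (P2 := P2)
      (P3 := P3) (P4 := P1) (M12 := M24) (M13 := M34) (M14 := M14) (M23 := M23) (M24 := M12)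
      (M34 := M13) k24 fun x y z w => by
        have := H w y z x
        simp only [quarticFun, quadFun] at this ⊢
        linear_combination this)
  by_cases k34 : m34 = 0
  swap
  · exact Or.inl (quadric_mixed (p1 := p3) (p2 := p4) (p3 := p1) (p4 := p2) (m12 := m34)
      (m13 := m13) (m14 := m23) (m23 := m14) (m24 := m24) (m34 := m12) (P1 := P3) (P2 := P4)
      (P3 := P1) (P4 := P2) (M12 := M34) (M13 := M13) (M14 := M23) (M23 := M14) (M24 := M24)
      (M34 := M12) k34 fun x y z w => by
        have := H z w x y
        simp only [quarticFun, quadFun] at this ⊢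
        linear_combination this)
  right
  have ha := quaternary_coeff H
  subst k12 k13 k14 k23 k24 k34
  simp only [quarticFun, quadFun] at H
  have pair : ∀ {p r P R M : ℂ}, (∀ x y : ℂ, b * (x ^ 2 * y ^ 2) + 1 * (x ^ 4 + y ^ 4) =
      (p * x ^ 2 + r * y ^ 2 + 0 * (x * y)) * (P * x ^ 2 + R * y ^ 2 + M * (x * y))) →
      p ≠ 0 ∧ r ≠ 0 ∧ p ^ 2 + r ^ 2 = b * p * r := by
    intro p r P R M h
    obtain ⟨h1, -, h3, -, h5⟩ := binary_coeffs h
    refine ⟨left_ne_zero_of_mul_eq_one h1, left_ne_zero_of_mul_eq_one h5, ?_⟩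
    linear_combination p * r * h3 - p ^ 2 * h5 - r ^ 2 * h1
  obtain ⟨n1, n2, r12⟩ := pair (p := p1) (r := p2) (P := P1) (R := P2) (M := M12)
    fun x y => by linear_combination H x y 0 0
  obtain ⟨n3, -, r34⟩ := pair (p := p3) (r := p4) (P := P3) (R := P4) (M := M34)
    fun x y => by linear_combination H 0 0 x y
  obtain ⟨-, -, r13⟩ := pair (p := p1) (r := p3) (P := P1) (R := P3) (M := M13)
    fun x y => by linear_combination H x 0 y 0
  obtain ⟨-, -, r14⟩ := pair (p := p1) (r := p4) (P := P1) (R := P4) (M := M14)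
    fun x y => by linear_combination H x 0 0 y
  obtain ⟨-, -, r23⟩ := pair (p := p2) (r := p3) (P := P2) (R := P3) (M := M23)
    fun x y => by linear_combination H 0 x y 0
  obtain ⟨-, -, r24⟩ := pair (p := p2) (r := p4) (P := P2) (R := P4) (M := M24)
    fun x y => by linear_combination H 0 x 0 y
  exact ⟨(pairwise_ratio n2 n3 r12 r13 r14 r23 r24 r34).1, by linear_combination -ha⟩

/-! ### Products of two quadrics with `c = 0` -/

/-- For `c = 0` and `b ≠ 0` a factor of the ternary form has no term `x²`; by symmetry it has no
diagonal terms at all. -/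
theorem ternary_diag_zero {b p1 p2 p3 m12 m13 m23 P1 P2 P3 M12 M13 M23 : ℂ} (hb : b ≠ 0)
    (H : ∀ x y z : ℂ, b * (x ^ 2 * y ^ 2 + x ^ 2 * z ^ 2 + y ^ 2 * z ^ 2)
        + 0 * (x ^ 4 + y ^ 4 + z ^ 4) =
      (p1 * x ^ 2 + p2 * y ^ 2 + p3 * z ^ 2 + m12 * (x * y) + m13 * (x * z) + m23 * (y * z)) *
      (P1 * x ^ 2 + P2 * y ^ 2 + P3 * z ^ 2 + M12 * (x * y) + M13 * (x * z) + M23 * (y * z))) :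
    p1 = 0 := by
  obtain ⟨u1, u2, u3, u4, u5⟩ := binary_coeffs (b := b) (c := 0) (p := p1) (r := p2) (m := m12)
    (P := P1) (R := P2) (M := M12) fun x y => by linear_combination H x y 0
  obtain ⟨-, v2, v3, v4, v5⟩ := binary_coeffs (b := b) (c := 0) (p := p1) (r := p3) (m := m13)
    (P := P1) (R := P3) (M := M13) fun x y => by linear_combination H x 0 y
  obtain ⟨-, w2, w3, w4, -⟩ := binary_coeffs (b := b) (c := 0) (p := p2) (r := p3) (m := m23)
    (P := P2) (R := P3) (M := M23) fun x y => by linear_combination H 0 x y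
  by_contra n1
  have hP1 : P1 = 0 := by simpa [n1] using u1
  subst hP1
  have hM12 : M12 = 0 := by simpa [n1] using u2
  have hM13 : M13 = 0 := by simpa [n1] using v2
  subst hM12 hM13
  have nP2 : P2 ≠ 0 := by
    rintro rfl
    exact hb (by linear_combination -u3)
  have nP3 : P3 ≠ 0 := by
    rintro rfl
    exact hb (by linear_combination -v3)
  have hp2 : p2 = 0 := by simpa [nP2] using u5
  have hp3 : p3 = 0 := by simpa [nP3] using v5
  subst hp2 hp3
  have hm23 : m23 = 0 := by simpa [nP3] using w4
  subst hm23
  exact hb (by linear_combination -w3)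

/-- For `c = 0` the diagonal terms vanish in both factors, so `mᵢⱼ * Mᵢⱼ = b`, and the coefficients
of `x²yz`, `xy²z`, `xyz²` make all `mᵢⱼ² + mᵢₖ²` vanish when `b ≠ 0`, a contradiction. -/
theorem ternary_zero {b p1 p2 p3 m12 m13 m23 P1 P2 P3 M12 M13 M23 : ℂ}
    (H : ∀ x y z : ℂ, b * (x ^ 2 * y ^ 2 + x ^ 2 * z ^ 2 + y ^ 2 * z ^ 2)
        + 0 * (x ^ 4 + y ^ 4 + z ^ 4) =
      (p1 * x ^ 2 + p2 * y ^ 2 + p3 * z ^ 2 + m12 * (x * y) + m13 * (x * z) + m23 * (y * z)) *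
      (P1 * x ^ 2 + P2 * y ^ 2 + P3 * z ^ 2 + M12 * (x * y) + M13 * (x * z) + M23 * (y * z))) :
    b = 0 := by
  by_contra hb
  have hp1 : p1 = 0 := ternary_diag_zero hb H
  have hp2 : p2 = 0 := ternary_diag_zero (p2 := p1) (p3 := p3) (m12 := m12) (m13 := m23)
    (m23 := m13) (P1 := P2) (P2 := P1) (P3 := P3) (M12 := M12) (M13 := M23) (M23 := M13) hb
    fun x y z => by linear_combination H y x z
  have hp3 : p3 = 0 := ternary_diag_zero (p2 := p2) (p3 := p1) (m12 := m23) (m13 := m13)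
    (m23 := m12) (P1 := P3) (P2 := P2) (P3 := P1) (M12 := M23) (M13 := M13) (M23 := M12) hb
    fun x y z => by linear_combination H z y x
  subst hp1 hp2 hp3
  obtain ⟨-, -, u, -, -⟩ := binary_coeffs (b := b) (c := 0) (p := 0) (r := 0) (m := m12)
    (P := P1) (R := P2) (M := M12) fun x y => by linear_combination H x y 0
  obtain ⟨-, -, v, -, -⟩ := binary_coeffs (b := b) (c := 0) (p := 0) (r := 0) (m := m13)
    (P := P1) (R := P3) (M := M13) fun x y => by linear_combination H x 0 y
  obtain ⟨-, u2, w, u4, -⟩ := binary_coeffs (b := b) (c := 0) (p := 0) (r := 0) (m := m23)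
    (P := P2) (R := P3) (M := M23) fun x y => by linear_combination H 0 x y
  have n12 : m12 ≠ 0 := by
    rintro rfl
    exact hb (by linear_combination -u)
  have n13 : m13 ≠ 0 := by
    rintro rfl
    exact hb (by linear_combination -v)
  have n23 : m23 ≠ 0 := by
    rintro rfl
    exact hb (by linear_combination -w)
  have hP2 : P2 = 0 := by simpa [n23] using u2
  have hP3 : P3 = 0 := by simpa [n23] using u4
  obtain ⟨-, u2', -, u4', -⟩ := binary_coeffs (b := b) (c := 0) (p := 0) (r := 0) (m := m12)
    (P := P1) (R := P2) (M := M12) fun x y => by linear_combination H x y 0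
  have hP1 : P1 = 0 := by simpa [n12] using u2'
  have t1 := ternary_coeff H
  have t2 := ternary_coeff (b := b) (c := 0) (p1 := 0) (p2 := 0) (p3 := 0) (m12 := m12)
    (m13 := m23) (m23 := m13) (P1 := P2) (P2 := P1) (P3 := P3) (M12 := M12) (M13 := M23)
    (M23 := M13) fun x y z => by linear_combination H y x z
  have t3 := ternary_coeff (b := b) (c := 0) (p1 := 0) (p2 := 0) (p3 := 0) (m12 := m13)
    (m13 := m23) (m23 := m12) (P1 := P3) (P2 := P1) (P3 := P2) (M12 := M13) (M13 := M23)
    (M23 := M12) fun x y z => by linear_combination H y z x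
  subst hP1 hP2 hP3
  have s1 : b * (m12 ^ 2 + m13 ^ 2) = 0 := by
    linear_combination m12 * m13 * t1 - m13 ^ 2 * u - m12 ^ 2 * v
  have s2 : b * (m12 ^ 2 + m23 ^ 2) = 0 := by
    linear_combination m12 * m23 * t2 - m23 ^ 2 * u - m12 ^ 2 * w
  have s3 : b * (m13 ^ 2 + m23 ^ 2) = 0 := by
    linear_combination m13 * m23 * t3 - m23 ^ 2 * v - m13 ^ 2 * w
  refine mul_ne_zero hb (pow_ne_zero 2 n12) ?_
  linear_combination (s1 + s2 - s3) / 2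

/-! ### The classification -/

/-- The triples `(a, b, c)` proportional to an exceptional one; the condition `a ^ 2 = 64 * c ^ 2`
covers `(-8, -2, 1)` and `(8, -2, 1)` together, and `(0, 0, 0)` is not excluded. -/
def Exceptional (a b c : ℂ) : Prop :=
  (b = 0 ∧ c = 0) ∨ (c ≠ 0 ∧ b = -2 * c ∧ a ^ 2 = 64 * c ^ 2) ∨ (c ≠ 0 ∧ b = 2 * c ∧ a = 0)

theorem exceptional_of_quadrics {a b c p1 p2 p3 p4 m12 m13 m14 m23 m24 m34
      P1 P2 P3 P4 M12 M13 M14 M23 M24 M34 : ℂ}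
    (H : ∀ x y z w : ℂ, quarticFun a b c x y z w =
      quadFun p1 p2 p3 p4 m12 m13 m14 m23 m24 m34 x y z w *
      quadFun P1 P2 P3 P4 M12 M13 M14 M23 M24 M34 x y z w) :
    Exceptional a b c := by
  by_cases hc : c = 0
  · subst hc
    simp only [quarticFun, quadFun] at H
    exact Or.inl ⟨ternary_zero (b := b) (p1 := p1) (p2 := p2) (p3 := p3)
      (m12 := m12) (m13 := m13) (m23 := m23) (P1 := P1) (P2 := P2) (P3 := P3) (M12 := M12)
      (M13 := M13) (M23 := M23) fun x y z => by linear_combination H x y z 0, rfl⟩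
  · have key := quadric_one (a := a / c) (b := b / c) (p1 := p1 / c) (p2 := p2 / c)
      (p3 := p3 / c) (p4 := p4 / c) (m12 := m12 / c) (m13 := m13 / c) (m14 := m14 / c)
      (m23 := m23 / c) (m24 := m24 / c) (m34 := m34 / c) (P1 := P1) (P2 := P2) (P3 := P3)
      (P4 := P4) (M12 := M12) (M13 := M13) (M14 := M14) (M23 := M23) (M24 := M24) (M34 := M34)
      fun x y z w => by
        have h1 : quarticFun (a / c) (b / c) 1 x y z w = quarticFun a b c x y z w / c := by
          simp only [quarticFun]
          field_simp
        rw [h1, H x y z w]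
        simp only [quadFun]
        ring
    rcases key with ⟨hb, ha⟩ | ⟨hb, ha⟩
    · field_simp at hb ha
      exact Or.inr (Or.inl ⟨hc, by linear_combination hb, by linear_combination ha⟩)
    · field_simp at hb
      exact Or.inr (Or.inr ⟨hc, by linear_combination hb, by simpa [hc] using ha⟩)

/-- A quartic form vanishing on a plane is exceptional. -/
theorem exceptional_of_plane {a b c l1 l2 l3 l4 : ℂ}
    (hl : ¬(l1 = 0 ∧ l2 = 0 ∧ l3 = 0 ∧ l4 = 0))
    (H : ∀ x y z w : ℂ, l1 * x + l2 * y + l3 * z + l4 * w = 0 → quarticFun a b c x y z w = 0) :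
    Exceptional a b c := by
  simp only [quarticFun] at H
  have h12 := H l2 (-l1) 0 0 (by ring)
  have h13 := H l3 0 (-l1) 0 (by ring)
  have h14 := H l4 0 0 (-l1) (by ring)
  have h23 := H 0 l3 (-l2) 0 (by ring)
  have h24 := H 0 l4 0 (-l2) (by ring)
  have h34 := H 0 0 l4 (-l3) (by ring)
  by_cases hc : c = 0
  · subst hc
    left
    refine ⟨?_, rfl⟩
    by_contra hb
    have g12 : l1 = 0 ∨ l2 = 0 := by simpa [hb, or_comm] using h12
    have g13 : l1 = 0 ∨ l3 = 0 := by simpa [hb, or_comm] using h13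
    have g14 : l1 = 0 ∨ l4 = 0 := by simpa [hb, or_comm] using h14
    have g23 : l2 = 0 ∨ l3 = 0 := by simpa [hb, or_comm] using h23
    have g24 : l2 = 0 ∨ l4 = 0 := by simpa [hb, or_comm] using h24
    have g34 : l3 = 0 ∨ l4 = 0 := by simpa [hb, or_comm] using h34
    have two : (l1 = 0 ∧ l2 = 0) ∨ (l3 = 0 ∧ l4 = 0) := by tauto
    rcases two with ⟨k1, k2⟩ | ⟨k1, k2⟩
    · exact hb (by linear_combination H 1 1 0 0 (by linear_combination k1 + k2))
    · exact hb (by linear_combination H 0 0 1 1 (by linear_combination k1 + k2))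
  · have n1 : l1 ≠ 0 := fun k => hc (by linear_combination H 1 0 0 0 (by linear_combination k))
    have n2 : l2 ≠ 0 := fun k => hc (by linear_combination H 0 1 0 0 (by linear_combination k))
    have n3 : l3 ≠ 0 := fun k => hc (by linear_combination H 0 0 1 0 (by linear_combination k))
    obtain ⟨hβ, e2, e3, e4⟩ := pairwise_ratio (β := -b / c) (p1 := l1 ^ 2) (p2 := l2 ^ 2)
      (p3 := l3 ^ 2) (p4 := l4 ^ 2) (pow_ne_zero 2 n2) (pow_ne_zero 2 n3)
      (by field_simp; linear_combination h12) (by field_simp; linear_combination h13)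
      (by field_simp; linear_combination h14) (by field_simp; linear_combination h23)
      (by field_simp; linear_combination h24) (by field_simp; linear_combination h34)
    have hb : b = -2 * c := by
      field_simp at hβ
      linear_combination -hβ
    refine Or.inr (Or.inl ⟨hc, hb, ?_⟩)
    -- The `lᵢ` are equal up to sign, so this is the point `(1, 1, 1, -3)` up to signs and scaling.
    have hp := H l1 l2 l3 (-3 * l4) (by linear_combination e2 + e3 - 3 * e4)
    set T := l1 ^ 2 with hT
    set L := l1 * l2 * l3 * l4 with hL
    have hLT : L ^ 2 = T ^ 4 := by
      have : L ^ 2 = l1 ^ 2 * l2 ^ 2 * l3 ^ 2 * l4 ^ 2 := by rw [hL]; ring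
      rw [this, e2, e3, e4, ← hT]
      ring
    have haL : a * L = 8 * c * T ^ 2 := by
      have h4 : ∀ r : ℂ, r ^ 4 = (r ^ 2) ^ 2 := fun r => by ring
      simp only [mul_pow, h4, e2, e3, e4, ← hT, hb] at hp
      linear_combination -hp / 3
    refine mul_left_cancel₀ (pow_ne_zero 4 (pow_ne_zero 2 n1) : T ^ 4 ≠ 0) ?_
    linear_combination (a * L + 8 * c * T ^ 2) * haL - a ^ 2 * hLT

theorem eval_quartic_eq (a b c : ℂ) (x : Fin 4 → ℂ) :
    eval x (quartic a b c) = quarticFun a b c (x 0) (x 1) (x 2) (x 3) :=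
  eval_quartic a b c x

theorem exceptional_of_linear {a b c : ℂ} {u v : MvPolynomial (Fin 4) ℂ}
    (hu : u.IsHomogeneous 1) (hu0 : u ≠ 0) (huv : quartic a b c = u * v) :
    Exceptional a b c := by
  obtain ⟨l, hl⟩ := linear_form hu
  refine exceptional_of_plane (l1 := l 0) (l2 := l 1) (l3 := l 2) (l4 := l 3) ?_ ?_
  · rintro ⟨k0, k1, k2, k3⟩
    exact hu0 (MvPolynomial.funext fun x => by simp [hl, k0, k1, k2, k3])
  · intro x y z w hx
    have h1 : eval ![x, y, z, w] u = 0 := by rw [hl]; exact hx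
    have h2 := eval_quartic_eq a b c ![x, y, z, w]
    rw [huv, map_mul, h1, zero_mul] at h2
    exact h2.symm

theorem exceptional_of_reducible {a b c : ℂ} (h : ¬(a = 0 ∧ b = 0 ∧ c = 0))
    {u v : MvPolynomial (Fin 4) ℂ} (hu : 0 < u.totalDegree) (hv : 0 < v.totalDegree)
    (huv : quartic a b c = u * v) : Exceptional a b c := by
  have q0 := quartic_ne_zero h
  have hq := quartic_isHomogeneous a b c
  have hdeg : u.totalDegree + v.totalDegree = 4 := by
    rw [← totalDegree_mul_of_isDomain, ← huv, hq.totalDegree q0]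
    · rintro rfl; simp at hu
    · rintro rfl; simp at hv
  have htop := homogeneousComponent_mul_top u v
  rw [← huv, hdeg, homogeneousComponent_eq_self hq] at htop
  have hU := homogeneousComponent_isHomogeneous u.totalDegree u
  have hV := homogeneousComponent_isHomogeneous v.totalDegree v
  generalize homogeneousComponent u.totalDegree u = U at *
  generalize homogeneousComponent v.totalDegree v = V at *
  have hU0 : U ≠ 0 := by
    rintro rfl
    exact q0 (by rw [htop, zero_mul])
  have hV0 : V ≠ 0 := by
    rintro rfl
    exact q0 (by rw [htop, mul_zero])
  have cases : u.totalDegree = 1 ∨ v.totalDegree = 1 ∨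
      (u.totalDegree = 2 ∧ v.totalDegree = 2) := by omega
  rcases cases with k | k | ⟨k, k'⟩
  · rw [k] at hU
    exact exceptional_of_linear hU hU0 htop
  · rw [k] at hV
    exact exceptional_of_linear hV hV0 (htop.trans (mul_comm U V))
  · rw [k] at hU
    rw [k'] at hV
    obtain ⟨p1, p2, p3, p4, m12, m13, m14, m23, m24, m34, hp⟩ := quadratic_form hU
    obtain ⟨P1, P2, P3, P4, M12, M13, M14, M23, M24, M34, hP⟩ := quadratic_form hV
    refine exceptional_of_quadrics (p1 := p1) (p2 := p2) (p3 := p3) (p4 := p4) (m12 := m12)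
      (m13 := m13) (m14 := m14) (m23 := m23) (m24 := m24) (m34 := m34) (P1 := P1) (P2 := P2)
      (P3 := P3) (P4 := P4) (M12 := M12) (M13 := M13) (M14 := M14) (M23 := M23) (M24 := M24)
      (M34 := M34) fun x y z w => ?_
    have h2 := eval_quartic_eq a b c ![x, y, z, w]
    rw [htop, map_mul, hp, hP] at h2
    exact h2.symm

/-! ### Reducible quartics -/

theorem statement16 (a b c : ℂ) (h : ¬(a = 0 ∧ b = 0 ∧ c = 0)) :
    (∃ u v : MvPolynomial (Fin 4) ℂ,
        0 < u.totalDegree ∧ 0 < v.totalDegree ∧ quartic a b c = u * v) ↔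
      ∃ t : ℂ, t ≠ 0 ∧
        ((a, b, c) = (t, 0, 0) ∨ (a, b, c) = (-8 * t, -2 * t, t) ∨
          (a, b, c) = (8 * t, -2 * t, t) ∨ (a, b, c) = (0, 2 * t, t)) := by
  constructor
  · rintro ⟨u, v, hu, hv, huv⟩
    rcases exceptional_of_reducible h hu hv huv with ⟨hb, hc⟩ | ⟨hc, hb, ha⟩ | ⟨hc, hb, ha⟩
    · subst hb hc
      exact ⟨a, fun ha => h ⟨ha, rfl, rfl⟩, Or.inl rfl⟩
    · have ha' : (a - 8 * c) * (a + 8 * c) = 0 := by linear_combination ha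
      rcases mul_eq_zero.1 ha' with k | k
      · have k' : a = 8 * c := by linear_combination k
        exact ⟨c, hc, Or.inr (Or.inr (Or.inl (by rw [k', hb])))⟩
      · have k' : a = -8 * c := by linear_combination k
        exact ⟨c, hc, Or.inr (Or.inl (by rw [k', hb]))⟩
    · exact ⟨c, hc, Or.inr (Or.inr (Or.inr (by rw [ha, hb])))⟩
  · rintro ⟨t, ht, k | k | k | k⟩ <;> simp only [Prod.mk.injEq] at k <;>
      obtain ⟨rfl, rfl, rfl⟩ := k
    · refine ⟨C a * X 0, X 1 * X 2 * X 3, totalDegree_pos_of_eval_ne 0 1 ?_,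
        totalDegree_pos_of_eval_ne 0 1 ?_, ?_⟩
      · simpa using ht.symm
      · simp
      · simp only [quartic, map_zero]
        ring
    · refine ⟨C c * (X 0 + X 1 + X 2 - X 3),
        (X 0 + X 1 - X 2 + X 3) * (X 0 - X 1 + X 2 + X 3) * (X 0 - X 1 - X 2 - X 3),
        totalDegree_pos_of_eval_ne 0 ![1, 0, 0, 0] ?_,
        totalDegree_pos_of_eval_ne 0 ![1, 0, 0, 0] ?_, ?_⟩
      · simpa using ht.symm
      · simp
      · simp only [quartic, map_mul, map_neg, map_ofNat]
        ring
    · refine ⟨C c * (X 0 + X 1 + X 2 + X 3),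
        (X 0 + X 1 - X 2 - X 3) * (X 0 - X 1 + X 2 - X 3) * (X 0 - X 1 - X 2 + X 3),
        totalDegree_pos_of_eval_ne 0 ![1, 0, 0, 0] ?_,
        totalDegree_pos_of_eval_ne 0 ![1, 0, 0, 0] ?_, ?_⟩
      · simpa using ht.symm
      · simp
      · simp only [quartic, map_mul, map_neg, map_ofNat]
        ring
    · refine ⟨C c * (X 0 ^ 2 + X 1 ^ 2 + X 2 ^ 2 + X 3 ^ 2),
        X 0 ^ 2 + X 1 ^ 2 + X 2 ^ 2 + X 3 ^ 2,
        totalDegree_pos_of_eval_ne 0 ![1, 0, 0, 0] ?_,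
        totalDegree_pos_of_eval_ne 0 ![1, 0, 0, 0] ?_, ?_⟩
      · simpa using ht.symm
      · simp
      · simp only [quartic, map_mul, map_zero, map_ofNat]
        ring

end
end

section
/- For (a,b) ∈ ℂ² with (a,b) ≠ (0,0), define the three homogeneous quartic polynomials F₁ = a(x₁²x₂² − x₀²x₁² − x₀²x₃² − x₂²x₃²) + b(x₀⁴ − x₁⁴ + x₂⁴ − x₃⁴), F₂ = a(x₂²x₃² − x₀²x₁² − x₀²x₂² − x₁²x₃²) − b(x₀⁴ − x₁⁴ − x₂⁴ + x₃⁴), F₃ = a(x₁²x₃² − x₀²x₂² + x₀²x₃² + x₁²x₂²) + b(x₀⁴ + x₁⁴ − x₂⁴ − x₃⁴) in ℂ[x₀,x₁,x₂,x₃]. If the common zero locus of F₁, F₂, F₃ in ℙ³(ℂ) is infinite (i.e., contains a curve), then 3a² − 4ab + 4b² = 0 or a + 2b = 0. -/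
/-!
Set `y i = x i ^ 2` and view `y` as a complex quaternion. Each `Fⱼ` is then a linear form in one
column of the Euler–Rodrigues matrix `R(y)` of `y`, a matrix satisfying `R * Rᵀ = N ^ 2` and
`adj R = N * Rᵀ`, where `N = y₀² + y₁² + y₂² + y₃²`. With `h = a / 2`, the equations say that the
columns of `R` are
orthogonal to `(b, h, h)`, `(h, b, -h)` and `(-h, h, -b)` respectively.

On the quadric `N = 0` the columns of `R` are proportional and the rows and columns are null, so a
nonzero `R` would have two nonzero columns and hence yield a nonzero null vector orthogonal to two
of the three fixed vectors. The cross product of any two of those is `h + b` times a vector of norm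
`3 * h ^ 2 - 2 * h * b + b ^ 2`, so outside the exceptional parameters there is no such vector
(`quadrics_eq_zero`): the common zero locus does not meet `N = 0`.

A projective variety that misses a hypersurface is finite. This is `finite_of_no_common_zero`,
deduced from the Nullstellensatz: by `exists_pow_eq_eval` the functions on the affine model `N = 1`
form a finite-dimensional algebra.
-/

open MvPolynomial

noncomputable section

/-- `ℙ³(ℂ)`: the complex projective 3-space. -/
abbrev P3 : Type := Projectivization ℂ (Fin 4 → ℂ)

def F1 (a b : ℂ) : MvPolynomial (Fin 4) ℂ :=
  C a * (X 1 ^ 2 * X 2 ^ 2 - X 0 ^ 2 * X 1 ^ 2 - X 0 ^ 2 * X 3 ^ 2 - X 2 ^ 2 * X 3 ^ 2) +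
    C b * (X 0 ^ 4 - X 1 ^ 4 + X 2 ^ 4 - X 3 ^ 4)

def F2 (a b : ℂ) : MvPolynomial (Fin 4) ℂ :=
  C a * (X 2 ^ 2 * X 3 ^ 2 - X 0 ^ 2 * X 1 ^ 2 - X 0 ^ 2 * X 2 ^ 2 - X 1 ^ 2 * X 3 ^ 2) -
    C b * (X 0 ^ 4 - X 1 ^ 4 - X 2 ^ 4 + X 3 ^ 4)

def F3 (a b : ℂ) : MvPolynomial (Fin 4) ℂ :=
  C a * (X 1 ^ 2 * X 3 ^ 2 - X 0 ^ 2 * X 2 ^ 2 + X 0 ^ 2 * X 3 ^ 2 + X 1 ^ 2 * X 2 ^ 2) +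
    C b * (X 0 ^ 4 + X 1 ^ 4 - X 2 ^ 4 - X 3 ^ 4)

/-- The common zero locus in `ℙ³(ℂ)` of `F₁, F₂, F₃`: the points all of whose homogeneous
coordinate representatives annihilate the three polynomials. -/
def zeroLocus (a b : ℂ) : Set P3 :=
  {p : P3 | ∀ (v : Fin 4 → ℂ) (hv : v ≠ 0), Projectivization.mk ℂ v hv = p →
    eval v (F1 a b) = 0 ∧ eval v (F2 a b) = 0 ∧ eval v (F3 a b) = 0}

/-- The vectors `(b, h, h)` and `(h, b, -h)` have cross product `(h + b) • (-h, h, b - h)`, and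
`3 * h ^ 2 - 2 * h * b + b ^ 2` is the norm of the second factor. A null vector orthogonal to both is
proportional to it, hence zero. The other pairs of vectors occurring in `quadrics_eq_zero` reduce to
this one by permuting coordinates and changing their signs. -/
lemma eq_zero_of_null_of_orthogonal {b h p q r : ℂ} (h₁ : h + b ≠ 0)
    (h₂ : 3 * h ^ 2 - 2 * h * b + b ^ 2 ≠ 0) (e₁ : b * p + h * q + h * r = 0)
    (e₂ : h * p + b * q - h * r = 0) (e₃ : p ^ 2 + q ^ 2 + r ^ 2 = 0) :
    p = 0 ∧ q = 0 ∧ r = 0 := by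
  have hq : q = -p := by
    have : (h + b) * (p + q) = 0 := by linear_combination e₁ + e₂
    rcases mul_eq_zero.1 this with h0 | h0
    · exact absurd h0 h₁
    · linear_combination h0
  subst hq
  have hp : p = 0 := by
    have : (3 * h ^ 2 - 2 * h * b + b ^ 2) * p ^ 2 = 0 := by
      linear_combination h ^ 2 * e₃ + ((b - h) * p - h * r) * e₁
    simpa [h₂] using this
  subst hp
  refine ⟨rfl, by simp, ?_⟩
  simpa using e₃

/-- If `(p, q, r)` and `(p', q', r')` are proportional and the second is nonzero, a linear form
vanishing on the second vanishes on the first. -/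
lemma dot_eq_zero_or_eq_zero {p q r p' q' r' m₁ m₂ m₃ : ℂ} (e₁ : p * q' = q * p')
    (e₂ : p * r' = r * p') (e₃ : q * r' = r * q') (e : m₁ * p' + m₂ * q' + m₃ * r' = 0) :
    m₁ * p + m₂ * q + m₃ * r = 0 ∨ (p' = 0 ∧ q' = 0 ∧ r' = 0) := by
  by_cases hz : m₁ * p + m₂ * q + m₃ * r = 0
  · exact Or.inl hz
  · right
    refine ⟨mul_left_cancel₀ hz ?_, mul_left_cancel₀ hz ?_, mul_left_cancel₀ hz ?_⟩
    · linear_combination p * e - m₂ * e₁ - m₃ * e₂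
    · linear_combination q * e + m₁ * e₁ - m₃ * e₃
    · linear_combination r * e + m₁ * e₂ + m₂ * e₃

/-- In the squared coordinates `y i = x i ^ 2`, the three quadrics and the quadric
`y₀² + y₁² + y₂² + y₃² = 0` have no common point. With `h = a / 2`, the hypotheses `q₁`, `q₂`, `q₃`
say that the columns of the Euler–Rodrigues matrix of the quaternion `y` are orthogonal to fixed
vectors; when the quaternion norm vanishes, this matrix has proportional columns and null rows. -/
lemma quadrics_eq_zero {b h s x y z : ℂ} (h₁ : h + b ≠ 0)
    (h₂ : 3 * h ^ 2 - 2 * h * b + b ^ 2 ≠ 0)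
    (q₁ : 2 * h * (x * y - s * x - s * z - y * z) + b * (s ^ 2 - x ^ 2 + y ^ 2 - z ^ 2) = 0)
    (q₂ : 2 * h * (y * z - s * x - s * y - x * z) - b * (s ^ 2 - x ^ 2 - y ^ 2 + z ^ 2) = 0)
    (q₃ : 2 * h * (x * z - s * y + s * z + x * y) + b * (s ^ 2 + x ^ 2 - y ^ 2 - z ^ 2) = 0)
    (hN : s ^ 2 + x ^ 2 + y ^ 2 + z ^ 2 = 0) :
    s = 0 ∧ x = 0 ∧ y = 0 ∧ z = 0 := by
  obtain ⟨A, hA⟩ : ∃ A, A = s ^ 2 + x ^ 2 - y ^ 2 - z ^ 2 := ⟨_, rfl⟩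
  obtain ⟨B, hB⟩ : ∃ B, B = 2 * (x * y - s * z) := ⟨_, rfl⟩
  obtain ⟨C, hC⟩ : ∃ C, C = 2 * (x * z + s * y) := ⟨_, rfl⟩
  obtain ⟨A', hA'⟩ : ∃ A', A' = 2 * (x * y + s * z) := ⟨_, rfl⟩
  obtain ⟨B', hB'⟩ : ∃ B', B' = s ^ 2 - x ^ 2 + y ^ 2 - z ^ 2 := ⟨_, rfl⟩
  obtain ⟨C', hC'⟩ : ∃ C', C' = 2 * (y * z - s * x) := ⟨_, rfl⟩
  obtain ⟨A'', hA''⟩ : ∃ A'', A'' = 2 * (x * z - s * y) := ⟨_, rfl⟩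
  obtain ⟨B'', hB''⟩ : ∃ B'', B'' = 2 * (y * z + s * x) := ⟨_, rfl⟩
  obtain ⟨C'', hC''⟩ : ∃ C'', C'' = s ^ 2 - x ^ 2 - y ^ 2 + z ^ 2 := ⟨_, rfl⟩
  have a₁ : b * A + h * A' + h * A'' = 0 := by
    rw [hA, hA', hA'']; linear_combination q₃
  have b₁ : h * B + b * B' + (-h) * B'' = 0 := by
    rw [hB, hB', hB'']; linear_combination q₁
  have c₁ : (-h) * C + h * C' + (-b) * C'' = 0 := by
    rw [hC, hC', hC'']; linear_combination q₂
  -- The adjugate of the matrix is the quaternion norm times its transpose.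
  have ab₁ : A * B' = A' * B := by
    rw [hA, hA', hB, hB']; linear_combination (s ^ 2 - x ^ 2 - y ^ 2 + z ^ 2) * hN
  have ab₂ : A * B'' = A'' * B := by
    rw [hA, hA'', hB, hB'']; linear_combination (-2 * (y * z - s * x)) * hN
  have ab₃ : A' * B'' = A'' * B' := by
    rw [hA', hA'', hB', hB'']; linear_combination (2 * (x * z + s * y)) * hN
  have ac₁ : A * C' = A' * C := by
    rw [hA, hA', hC, hC']; linear_combination (-2 * (y * z + s * x)) * hN
  have ac₂ : A * C'' = A'' * C := by
    rw [hA, hA'', hC, hC'']; linear_combination (s ^ 2 - x ^ 2 + y ^ 2 - z ^ 2) * hN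
  have ac₃ : A' * C'' = A'' * C' := by
    rw [hA', hA'', hC', hC'']; linear_combination (-2 * (x * y - s * z)) * hN
  have bc₁ : B * C' = B' * C := by
    rw [hB, hB', hC, hC']; linear_combination (2 * (x * z - s * y)) * hN
  have bc₂ : B * C'' = B'' * C := by
    rw [hB, hB'', hC, hC'']; linear_combination (-2 * (x * y + s * z)) * hN
  have bc₃ : B' * C'' = B'' * C' := by
    rw [hB', hB'', hC', hC'']; linear_combination (s ^ 2 + x ^ 2 - y ^ 2 - z ^ 2) * hN
  have cA : A ^ 2 + A' ^ 2 + A'' ^ 2 = 0 := by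
    rw [hA, hA', hA'']; linear_combination (s ^ 2 + x ^ 2 + y ^ 2 + z ^ 2) * hN
  have cB : B ^ 2 + B' ^ 2 + B'' ^ 2 = 0 := by
    rw [hB, hB', hB'']; linear_combination (s ^ 2 + x ^ 2 + y ^ 2 + z ^ 2) * hN
  have r₁ : A ^ 2 + B ^ 2 + C ^ 2 = 0 := by
    rw [hA, hB, hC]; linear_combination (s ^ 2 + x ^ 2 + y ^ 2 + z ^ 2) * hN
  have r₂ : A' ^ 2 + B' ^ 2 + C' ^ 2 = 0 := by
    rw [hA', hB', hC']; linear_combination (s ^ 2 + x ^ 2 + y ^ 2 + z ^ 2) * hN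
  have r₃ : A'' ^ 2 + B'' ^ 2 + C'' ^ 2 = 0 := by
    rw [hA'', hB'', hC'']; linear_combination (s ^ 2 + x ^ 2 + y ^ 2 + z ^ 2) * hN
  have hAB : (A = 0 ∧ A' = 0 ∧ A'' = 0) ∨ (B = 0 ∧ B' = 0 ∧ B'' = 0) := by
    rcases dot_eq_zero_or_eq_zero ab₁ ab₂ ab₃ b₁ with e | e
    · exact Or.inl (eq_zero_of_null_of_orthogonal h₁ h₂ a₁ (by linear_combination e) cA)
    · exact Or.inr e
  have hAC : (A = 0 ∧ A' = 0 ∧ A'' = 0) ∨ (C = 0 ∧ C' = 0 ∧ C'' = 0) := by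
    rcases dot_eq_zero_or_eq_zero ac₁ ac₂ ac₃ c₁ with e | e
    · have := eq_zero_of_null_of_orthogonal (p := A) (q := A'') (r := A') h₁ h₂
        (by linear_combination a₁) (by linear_combination -e) (by linear_combination cA)
      exact Or.inl ⟨this.1, this.2.2, this.2.1⟩
    · exact Or.inr e
  have hBC : (B = 0 ∧ B' = 0 ∧ B'' = 0) ∨ (C = 0 ∧ C' = 0 ∧ C'' = 0) := by
    rcases dot_eq_zero_or_eq_zero bc₁ bc₂ bc₃ c₁ with e | e
    · have := eq_zero_of_null_of_orthogonal (p := B') (q := -B'') (r := B) h₁ h₂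
        (by linear_combination b₁) (by linear_combination e) (by linear_combination cB)
      exact Or.inl ⟨this.2.2, this.1, by simpa using this.2.1⟩
    · exact Or.inr e
  -- Two columns vanish, and the rows are null, so the third column vanishes as well.
  have hdiag : A = 0 ∧ B' = 0 ∧ C'' = 0 := by
    clear * - hAB hAC hBC r₁ r₂ r₃
    grind
  obtain ⟨d₁, d₂, d₃⟩ := hdiag
  rw [hA] at d₁
  rw [hB'] at d₂
  rw [hC''] at d₃
  refine ⟨?_, ?_, ?_, ?_⟩ <;> rw [← sq_eq_zero_iff]
  · linear_combination (hN + d₁ + d₂ + d₃) / 4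
  · linear_combination (hN + d₁ - d₂ - d₃) / 4
  · linear_combination (hN - d₁ + d₂ - d₃) / 4
  · linear_combination (hN - d₁ - d₂ + d₃) / 4

section Finiteness

variable {K σ : Type*} [Field K] [IsAlgClosed K] [Finite σ]

attribute [local instance] MvPolynomial.gradedAlgebra

/-- If the forms in `T` and the form `N` of positive degree have no common zero except the origin,
then on the affine set cut out by `T` and `N = 1` some power `v i ^ k` of each coordinate is a
polynomial of degree less than `k` in the coordinates. This is the degree `k` part of the relation
`X i ^ k ∈ (T, N)` given by the Nullstellensatz. -/
lemma exists_pow_eq_eval (T : Set (MvPolynomial σ K)) (hT : ∀ f ∈ T, ∃ m, f.IsHomogeneous m)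
    (N : MvPolynomial σ K) {n : ℕ} (hn : 0 < n) (hN : N.IsHomogeneous n)
    (h0 : ∀ v : σ → K, (∀ f ∈ T, eval v f = 0) → eval v N = 0 → v = 0) (i : σ) :
    ∃ (k : ℕ) (c : MvPolynomial σ K), (c.totalDegree < k ∨ c = 0) ∧
      ∀ v : σ → K, (∀ f ∈ T, eval v f = 0) → eval v N = 1 → v i ^ k = eval v c := by
  have hmem : (X i : MvPolynomial σ K) ∈ (Ideal.span (insert N T)).radical := by
    rw [← MvPolynomial.vanishingIdeal_zeroLocus_eq_radical (K := K),
      MvPolynomial.zeroLocus_span]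
    intro v hv
    have : v = 0 := h0 v (fun f hf => by simpa [aeval_eq_eval] using hv f (Or.inr hf))
      (by simpa [aeval_eq_eval] using hv N (Or.inl rfl))
    simp [this]
  obtain ⟨k, hk⟩ := hmem
  obtain ⟨B, hB⟩ := (Ideal.mem_span_insert' _ _ _).1 hk
  have hhom : (Ideal.span T).IsHomogeneous (homogeneousSubmodule σ K) :=
    Ideal.homogeneous_span _ _ fun f hf => hT f hf
  have hcomp := homogeneousComponent_mem_of_mem hhom hB k
  have hBN : homogeneousComponent k (B * N) =
      (∑ m ∈ Finset.range (B.totalDegree + 1),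
        if m + n = k then homogeneousComponent m B else 0) * N := by
    conv_lhs => rw [← sum_homogeneousComponent B]
    rw [Finset.sum_mul, map_sum, Finset.sum_mul]
    refine Finset.sum_congr rfl fun m _ => ?_
    rw [homogeneousComponent_of_mem (((homogeneousComponent_isHomogeneous m B).mul hN) :
      _ ∈ homogeneousSubmodule σ K (m + n))]
    simp only [eq_comm (a := k), ite_mul, zero_mul]
  rw [map_add, hBN, homogeneousComponent_eq_self (isHomogeneous_X_pow i k)] at hcomp
  have hle : Ideal.span T ≤ MvPolynomial.vanishingIdeal K
      {v : σ → K | ∀ f ∈ T, eval v f = 0} :=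
    Ideal.span_le.2 fun f hf v hv => by simpa [aeval_eq_eval] using hv f hf
  refine ⟨k, -∑ m ∈ Finset.range (B.totalDegree + 1),
        if m + n = k then homogeneousComponent m B else 0, ?_, ?_⟩
  · rcases Nat.eq_zero_or_pos k with rfl | hkpos
    · right
      rw [neg_eq_zero]
      exact Finset.sum_eq_zero fun m _ => if_neg (by omega)
    · left
      rw [totalDegree_neg]
      refine lt_of_le_of_lt (totalDegree_finsetSum_le (d := k - 1) fun m _ => ?_) (by omega)
      split_ifs with hm
      · exact (homogeneousComponent_isHomogeneous m B).totalDegree_le.trans (by omega)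
      · simp
  · intro v hv hv1
    have := hle hcomp v hv
    simp only [aeval_eq_eval, map_add, map_mul, map_pow, eval_X, hv1,
      mul_one] at this
    rw [map_neg]
    linear_combination this

/-- A projective variety avoiding the hypersurface `N = 0` is finite: on its affine model `N = 1`
the algebra of polynomial functions is finite-dimensional, so every coordinate is a root of a fixed
monic polynomial. -/
lemma finite_of_no_common_zero (T : Set (MvPolynomial σ K))
    (hT : ∀ f ∈ T, ∃ m, f.IsHomogeneous m)
    (N : MvPolynomial σ K) {n : ℕ} (hn : 0 < n) (hN : N.IsHomogeneous n)
    (h0 : ∀ v : σ → K, (∀ f ∈ T, eval v f = 0) → eval v N = 0 → v = 0) :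
    {v : σ → K | (∀ f ∈ T, eval v f = 0) ∧ eval v N = 1}.Finite := by
  classical
  have := Fintype.ofFinite σ
  set S := {v : σ → K | (∀ f ∈ T, eval v f = 0) ∧ eval v N = 1}
  choose k c hc hpow using exists_pow_eq_eval T hT N hn hN h0
  let φ : MvPolynomial σ K →ₐ[K] (S → K) := AlgHom.pi fun v : S => aeval v.1
  have hφ (p : MvPolynomial σ K) (v : S) : φ p v = eval v.1 p := by
    simp [φ, aeval_eq_eval]
  let D := ∑ i, k i
  let W : Submodule K (S → K) := (restrictTotalDegree σ K D).map φ.toLinearMap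
  have hW : ∀ m, ∀ p : MvPolynomial σ K, p.totalDegree ≤ m → φ p ∈ W := by
    intro m
    induction m using Nat.strong_induction_on with
    | _ m ih =>
      intro p hp
      rw [p.as_sum, map_sum]
      refine Submodule.sum_mem _ fun d hd => ?_
      by_cases hdD : d.degree ≤ D
      · exact ⟨_, (mem_restrictTotalDegree _ _ _).2 ((totalDegree_monomial_le d _).trans hdD), rfl⟩
      · obtain ⟨i, hi⟩ : ∃ i, k i ≤ d i := by
          by_contra! hcon
          refine hdD ?_
          rw [Finsupp.degree_eq_sum]
          exact Finset.sum_le_sum fun i _ => (hcon i).le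
        have hsplit : d = Finsupp.single i (k i) + (d - Finsupp.single i (k i)) :=
          (add_tsub_cancel_of_le (by simpa using hi)).symm
        have hdeg : d.degree = k i + (d - Finsupp.single i (k i)).degree := by
          conv_lhs => rw [hsplit]
          simp
        generalize coeff d p = e
        have hred : φ (monomial d e) =
            φ (c i * monomial (d - Finsupp.single i (k i)) e) := by
          funext v
          rw [hφ, hφ, map_mul, ← hpow i v.1 v.2.1 v.2.2]
          conv_lhs => rw [hsplit, ← one_mul e, ← monomial_mul]
          rw [map_mul]
          congr 1
          simp [eval_monomial]
        rw [hred]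
        rcases hc i with hci | hci
        · have hdm : d.degree ≤ m := (le_totalDegree hd).trans hp
          have h1 := totalDegree_mul (c i) (monomial (d - Finsupp.single i (k i)) e)
          have h2 : (monomial (d - Finsupp.single i (k i)) e).totalDegree ≤
            (d - Finsupp.single i (k i)).degree := totalDegree_monomial_le _ _
          exact ih _ (by omega) _ le_rfl
        · simp [hci]
  have hfg : (Subalgebra.toSubmodule φ.range).FG := by
    have hle : Subalgebra.toSubmodule φ.range ≤ W := by
      rintro _ ⟨p, rfl⟩
      exact hW _ p le_rfl
    have : FiniteDimensional K W := inferInstance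
    have := Submodule.finiteDimensional_of_le hle
    exact Submodule.fg_iff_finiteDimensional _ |>.2 this
  have hint (i : σ) : IsIntegral K (φ (X i)) :=
    IsIntegral.of_mem_of_fg φ.range hfg _ ⟨X i, rfl⟩
  choose P hP hroot using hint
  refine (Set.Finite.pi' fun i => (P i).rootSet_finite K).subset fun v hv i => ?_
  rw [Polynomial.mem_rootSet]
  refine ⟨(hP i).ne_zero, ?_⟩
  have h1 := congrFun (hroot i) ⟨v, hv⟩
  have h2 : Polynomial.aeval (Pi.evalAlgHom K (fun _ : S => K) ⟨v, hv⟩ (φ (X i))) (P i) = 0 := by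
    rw [Polynomial.aeval_algHom_apply]
    exact h1
  simpa [hφ] using h2

end Finiteness

theorem statement19 (a b : ℂ) (h : ¬(a = 0 ∧ b = 0))
    (hinf : (zeroLocus a b).Infinite) :
    3 * a ^ 2 - 4 * a * b + 4 * b ^ 2 = 0 ∨ a + 2 * b = 0 := by
  by_contra! hcon
  obtain ⟨hc₂, hc₁⟩ := hcon
  have h₁ : a / 2 + b ≠ 0 := fun e => hc₁ (by linear_combination 2 * e)
  have h₂ : 3 * (a / 2) ^ 2 - 2 * (a / 2) * b + b ^ 2 ≠ 0 :=
    fun e => hc₂ (by linear_combination 4 * e)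
  let N : MvPolynomial (Fin 4) ℂ := ∑ i, X i ^ 4
  have hN : N.IsHomogeneous 4 := IsHomogeneous.sum _ _ _ fun i _ => isHomogeneous_X_pow i 4
  have hX2 (i j : Fin 4) : (X i ^ 2 * X j ^ 2 : MvPolynomial (Fin 4) ℂ).IsHomogeneous 4 :=
    (isHomogeneous_X_pow i 2).mul (isHomogeneous_X_pow j 2)
  have hX4 (i : Fin 4) : (X i ^ 4 : MvPolynomial (Fin 4) ℂ).IsHomogeneous 4 :=
    isHomogeneous_X_pow i 4
  have hC {f : MvPolynomial (Fin 4) ℂ} (c : ℂ) (hf : f.IsHomogeneous 4) :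
      (C c * f).IsHomogeneous 4 := hf.C_mul c
  have hF1 : (F1 a b).IsHomogeneous 4 :=
    (hC a ((((hX2 1 2).sub (hX2 0 1)).sub (hX2 0 3)).sub (hX2 2 3))).add
      (hC b ((((hX4 0).sub (hX4 1)).add (hX4 2)).sub (hX4 3)))
  have hF2 : (F2 a b).IsHomogeneous 4 :=
    (hC a ((((hX2 2 3).sub (hX2 0 1)).sub (hX2 0 2)).sub (hX2 1 3))).sub
      (hC b ((((hX4 0).sub (hX4 1)).sub (hX4 2)).add (hX4 3)))
  have hF3 : (F3 a b).IsHomogeneous 4 :=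
    (hC a ((((hX2 1 3).sub (hX2 0 2)).add (hX2 0 3)).add (hX2 1 2))).add
      (hC b ((((hX4 0).add (hX4 1)).sub (hX4 2)).sub (hX4 3)))
  let T : Set (MvPolynomial (Fin 4) ℂ) := {F1 a b, F2 a b, F3 a b}
  have hT : ∀ f ∈ T, ∃ m, f.IsHomogeneous m := by
    rintro f (rfl | rfl | rfl)
    exacts [⟨4, hF1⟩, ⟨4, hF2⟩, ⟨4, hF3⟩]
  have h0 : ∀ v : Fin 4 → ℂ, (∀ f ∈ T, eval v f = 0) → eval v N = 0 → v = 0 := by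
    intro v hv hv0
    have e1 := hv (F1 a b) (by simp [T])
    have e2 := hv (F2 a b) (by simp [T])
    have e3 := hv (F3 a b) (by simp [T])
    simp only [F1, F2, F3, N, Fin.sum_univ_four, map_add, map_sub, map_mul, map_pow, eval_X,
      eval_C] at e1 e2 e3 hv0
    obtain ⟨z0, z1, z2, z3⟩ := quadrics_eq_zero (s := v 0 ^ 2) (x := v 1 ^ 2) (y := v 2 ^ 2)
      (z := v 3 ^ 2) h₁ h₂ (by linear_combination e1) (by linear_combination e2)
      (by linear_combination e3) (by linear_combination hv0)
    rw [sq_eq_zero_iff] at z0 z1 z2 z3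
    funext i
    fin_cases i <;> assumption
  have hfin := finite_of_no_common_zero T hT N (by norm_num) hN h0
  -- Every point of the locus has a representative with `N = 1`, after scaling by a fourth root.
  have hne (v : Fin 4 → ℂ) (hv : eval v N = 1) : v ≠ 0 := by
    rintro rfl
    simp [N] at hv
  let g : (Fin 4 → ℂ) → P3 := fun v =>
    if hv : v ≠ 0 then Projectivization.mk ℂ v hv else Projectivization.mk ℂ 1 one_ne_zero
  refine hinf ((hfin.image g).subset ?_)
  intro p hp
  have hz := hp p.rep p.rep_nonzero p.mk_rep
  have hzT : ∀ f ∈ T, eval p.rep f = 0 := by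
    rintro f (rfl | rfl | rfl)
    exacts [hz.1, hz.2.1, hz.2.2]
  have hNz : eval p.rep N ≠ 0 := fun e => p.rep_nonzero (h0 _ hzT e)
  obtain ⟨t, ht⟩ := IsAlgClosed.exists_pow_nat_eq (eval p.rep N)⁻¹ (n := 4) (by norm_num)
  have ht0 : t ≠ 0 := by
    rintro rfl
    exact hNz (by simpa using ht.symm)
  have hscale : eval (t • p.rep) N = 1 := by
    have : eval (t • p.rep) N = t ^ 4 * eval p.rep N := by
      simp [N, mul_pow, Finset.mul_sum]
    rw [this, ht, inv_mul_cancel₀ hNz]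
  have hmk : Projectivization.mk ℂ (t • p.rep) (hne _ hscale) = p := by
    conv_rhs => rw [← p.mk_rep]
    rw [Projectivization.mk_eq_mk_iff']
    exact ⟨t, rfl⟩
  have hz' := hp _ (hne _ hscale) hmk
  refine ⟨t • p.rep, ⟨?_, hscale⟩, ?_⟩
  · rintro f (rfl | rfl | rfl)
    exacts [hz'.1, hz'.2.1, hz'.2.2]
  · simp only [g, dif_pos (hne _ hscale), hmk]

end
end
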